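/- arXiv:2504.12145 — 8 statements merged into one kernel-verified Lean document; each statement's English description precedes it below -/
import Mathlib

section
/- The quotient group (Grothendieck group of differences) of the commutative cancellative multiplicative monoid ℕ₀[x]* is a free abelian group. -/
open Polynomial

/-- `f ∈ ℕ₀[x]`: all coefficients of `f` are nonnegative. -/
def NNPoly (f : Polynomial ℤ) : Prop := ∀ n, 0 ≤ f.coeff n

/-- `f ∈ ℕ₀[x]* = ℕ₀[x] \ {0}`. -/
def NNStar (f : Polynomial ℤ) : Prop := NNPoly f ∧ f ≠ 0

/-- The image of a polynomial with integer coefficients in the field `ℚ(x)`. -/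
noncomputable def toRatFunc (f : Polynomial ℤ) : RatFunc ℚ :=
  algebraMap (Polynomial ℚ) (RatFunc ℚ) (f.map (Int.castRingHom ℚ))

/-- The quotient group of the cancellative monoid `ℕ₀[x]*`, realized as the subgroup of
the multiplicative group of `ℚ(x)` generated by `ℕ₀[x]*`. -/
noncomputable def quotGroupNNStar : Subgroup (RatFunc ℚ)ˣ :=
  Subgroup.closure {u : (RatFunc ℚ)ˣ | ∃ f, NNStar f ∧ (u : RatFunc ℚ) = toRatFunc f}


/-- A submodule of a free `ℤ`-module of arbitrary rank is free. -/
theorem free_of_submodule_finsupp {ι : Type*} (N : Submodule ℤ (ι →₀ ℤ)) :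
    Module.Free ℤ N := by
  classical
  obtain ⟨hlin, hwf⟩ := exists_wellOrder ι
  -- the leading coefficient ideals
  let F : ι → Submodule ℤ (ι →₀ ℤ) := fun i => N ⊓ Finsupp.supported ℤ ℤ (Set.Iic i)
  have hF : ∀ i v, v ∈ F i ↔ v ∈ N ∧ ∀ j, v j ≠ 0 → j ≤ i := by
    intro i v
    simp only [F, Submodule.mem_inf, Finsupp.mem_supported]
    refine and_congr_right fun _ => ?_
    constructor
    · intro h j hj
      exact h (by simpa using hj)
    · intro h j hj
      exact h j (by simpa using hj)
  have hgen : ∀ i, ∃ v ∈ F i, ∀ w ∈ F i, ∃ c : ℤ, w i = c * v i := by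
    intro i
    let I : Ideal ℤ := (F i).map (Finsupp.lapply i)
    obtain ⟨a, ha⟩ := (IsPrincipalIdealRing.principal I).principal
    have haI : a ∈ I := by rw [ha]; exact Submodule.mem_span_singleton_self a
    obtain ⟨v, hv, hva⟩ := haI
    refine ⟨v, hv, fun w hw => ?_⟩
    have hwI : w i ∈ I := ⟨w, hw, rfl⟩
    rw [ha] at hwI
    obtain ⟨c, hc⟩ := Submodule.mem_span_singleton.1 hwI
    refine ⟨c, ?_⟩
    have : v i = a := hva
    rw [this, ← hc, smul_eq_mul]
  choose v hvF hv using hgen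
  let S := {i : ι // v i i ≠ 0}
  let b : S → (ι →₀ ℤ) := fun s => v s.1
  have hli : LinearIndependent ℤ b := by
    rw [linearIndependent_iff]
    intro c hc
    by_contra hne
    have hsupp : c.support.Nonempty := Finsupp.support_nonempty_iff.2 hne
    let m := c.support.max' hsupp
    have hm : m ∈ c.support := c.support.max'_mem hsupp
    have h1 := DFunLike.congr_fun hc m.1
    rw [Finsupp.linearCombination_apply, Finsupp.sum, Finsupp.finset_sum_apply,
      Finset.sum_eq_single m] at h1
    · simp only [Finsupp.smul_apply, smul_eq_mul, Finsupp.coe_zero, Pi.zero_apply,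
        mul_eq_zero] at h1
      rcases h1 with h1 | h1
      · exact (Finsupp.mem_support_iff.1 hm) h1
      · exact m.2 h1
    · intro s hs hsm
      have hlt : s ≤ m := c.support.le_max' s hs
      have hz : b s m.1 = 0 := by
        by_contra h
        exact hsm (le_antisymm hlt (((hF _ _).1 (hvF s.1)).2 _ h))
      simp [hz]
    · intro h
      exact absurd hm h
  have hspan : Submodule.span ℤ (Set.range b) = N := by
    apply le_antisymm
    · rw [Submodule.span_le]
      rintro _ ⟨s, rfl⟩
      exact ((hF _ _).1 (hvF s.1)).1
    · have key : ∀ i, ∀ w ∈ F i, w ∈ Submodule.span ℤ (Set.range b) := by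
        intro i
        induction i using hwf.induction with
        | _ i ih =>
        intro w hw
        obtain ⟨c, hc⟩ := hv i w hw
        have hbi : c • v i ∈ Submodule.span ℤ (Set.range b) ∨ w i = 0 := by
          by_cases h0 : v i i = 0
          · right; rw [hc, h0, mul_zero]
          · left
            exact Submodule.smul_mem _ _ (Submodule.subset_span ⟨⟨i, h0⟩, rfl⟩)
        have red : ∀ w' ∈ F i, w' i = 0 → w' ∈ Submodule.span ℤ (Set.range b) := by
          intro w' hw' h0
          by_cases hz : w' = 0
          · rw [hz]; exact Submodule.zero_mem _
          have hs : w'.support.Nonempty := Finsupp.support_nonempty_iff.2 hz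
          have hk := Finsupp.mem_support_iff.1 (w'.support.max'_mem hs)
          refine ih (w'.support.max' hs) ?_ w' ?_
          · refine lt_of_le_of_ne (((hF _ _).1 hw').2 _ hk) ?_
            intro h
            rw [h] at hk
            exact hk h0
          · exact (hF _ _).2 ⟨((hF _ _).1 hw').1, fun j hj =>
              w'.support.le_max' j (Finsupp.mem_support_iff.2 hj)⟩
        rcases hbi with hbi | h0
        · have h2 := red (w - c • v i) ((F i).sub_mem hw ((F i).smul_mem c (hvF i)))
            (by simp [hc])
          have := Submodule.add_mem _ h2 hbi
          simpa using this
        · exact red w hw h0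
      intro w hw
      by_cases hz : w = 0
      · rw [hz]; exact Submodule.zero_mem _
      have hs : w.support.Nonempty := Finsupp.support_nonempty_iff.2 hz
      exact key (w.support.max' hs) w ((hF _ _).2 ⟨hw, fun j hj =>
        w.support.le_max' j (Finsupp.mem_support_iff.2 hj)⟩)
  rw [← hspan]
  exact Module.Free.of_basis (Module.Basis.span hli)

theorem free_of_injective_finsupp {A ι : Type*} [AddCommGroup A] (φ : A →+ (ι →₀ ℤ))
    (h : Function.Injective φ) : Module.Free ℤ A := by
  have := free_of_submodule_finsupp (LinearMap.range φ.toIntLinearMap)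
  exact Module.Free.of_equiv (LinearEquiv.ofInjective φ.toIntLinearMap h).symm

open Classical in
/-- The divisor of a polynomial. -/
noncomputable def divi (f : Polynomial ℤ) : Polynomial ℤ →₀ ℤ :=
  Finsupp.mapRange.addMonoidHom (Nat.castAddMonoidHom ℤ)
    (Multiset.toFinsupp (UniqueFactorizationMonoid.normalizedFactors f))

theorem divi_mul {f g : Polynomial ℤ} (hf : f ≠ 0) (hg : g ≠ 0) :
    divi (f * g) = divi f + divi g := by
  classical
  unfold divi
  rw [UniqueFactorizationMonoid.normalizedFactors_mul hf hg, map_add, map_add]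

theorem NNStar.eval_pos {f : Polynomial ℤ} (hf : NNStar f) : 0 < f.leadingCoeff :=
  lt_of_le_of_ne (hf.1 _) (Ne.symm (leadingCoeff_ne_zero.2 hf.2))

theorem divi_inj {f g : Polynomial ℤ} (hf : NNStar f) (hg : NNStar g)
    (h : divi f = divi g) : f = g := by
  classical
  have h1 : UniqueFactorizationMonoid.normalizedFactors f =
      UniqueFactorizationMonoid.normalizedFactors g := by
    apply Multiset.toFinsupp.injective
    ext p
    have := DFunLike.congr_fun h p
    simpa [divi] using this
  obtain ⟨u, hu⟩ := (UniqueFactorizationMonoid.associated_iff_normalizedFactors_eq_normalizedFactors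
    hf.2 hg.2).2 h1
  obtain ⟨r, hr, hru⟩ := Polynomial.isUnit_iff.1 u.isUnit
  have hl := congrArg Polynomial.leadingCoeff hu
  rw [← hru, leadingCoeff_mul, leadingCoeff_C] at hl
  rcases Int.isUnit_iff.1 hr with rfl | rfl
  · rw [← hu, ← hru]; simp
  · have := hf.eval_pos
    have := hg.eval_pos
    omega

theorem NNStar.mul {f g : Polynomial ℤ} (hf : NNStar f) (hg : NNStar g) : NNStar (f * g) := by
  refine ⟨fun n => ?_, mul_ne_zero hf.2 hg.2⟩
  rw [coeff_mul]
  exact Finset.sum_nonneg fun x _ => mul_nonneg (hf.1 _) (hg.1 _)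

theorem NNStar.one : NNStar 1 := by
  refine ⟨fun n => ?_, one_ne_zero⟩
  rw [coeff_one]
  split_ifs <;> norm_num

theorem toRatFunc_mul (f g : Polynomial ℤ) : toRatFunc (f * g) = toRatFunc f * toRatFunc g := by
  simp [toRatFunc]

theorem toRatFunc_one : toRatFunc 1 = 1 := by
  simp [toRatFunc]

theorem toRatFunc_injective : Function.Injective toRatFunc :=
  (RatFunc.algebraMap_injective ℚ).comp
    (Polynomial.map_injective _ (RingHom.injective_int (Int.castRingHom ℚ)))

theorem toRatFunc_ne_zero {f : Polynomial ℤ} (hf : f ≠ 0) : toRatFunc f ≠ 0 := by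
  intro h
  exact hf (toRatFunc_injective (h.trans (by simp [toRatFunc])))

theorem exists_rep (u : (RatFunc ℚ)ˣ) (hu : u ∈ quotGroupNNStar) :
    ∃ p : Polynomial ℤ × Polynomial ℤ, NNStar p.1 ∧ NNStar p.2 ∧
      (u : RatFunc ℚ) * toRatFunc p.2 = toRatFunc p.1 := by
  induction hu using Subgroup.closure_induction with
  | mem x hx =>
    obtain ⟨f, hf, hx⟩ := hx
    exact ⟨(f, 1), hf, NNStar.one, by rw [hx, toRatFunc_one, mul_one]⟩
  | one => exact ⟨(1, 1), NNStar.one, NNStar.one, by simp⟩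
  | mul x y _ _ hx hy =>
    obtain ⟨p, h1, h2, h3⟩ := hx
    obtain ⟨q, k1, k2, k3⟩ := hy
    refine ⟨(p.1 * q.1, p.2 * q.2), h1.mul k1, h2.mul k2, ?_⟩
    simp only [toRatFunc_mul, Units.val_mul]
    rw [← h3, ← k3]; ring
  | inv x _ hx =>
    obtain ⟨p, h1, h2, h3⟩ := hx
    refine ⟨(p.2, p.1), h2, h1, ?_⟩
    simp only
    rw [← h3, Units.inv_mul_cancel_left]

theorem divi_rep_eq {u : RatFunc ℚ} {f g f' g' : Polynomial ℤ} (hf : f ≠ 0) (hg : g ≠ 0)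
    (hf' : f' ≠ 0) (hg' : g' ≠ 0) (h : u * toRatFunc g = toRatFunc f)
    (h' : u * toRatFunc g' = toRatFunc f') : divi f - divi g = divi f' - divi g' := by
  have : f * g' = f' * g := by
    apply toRatFunc_injective
    rw [toRatFunc_mul, toRatFunc_mul, ← h, ← h']; ring
  have h2 := congrArg divi this
  rw [divi_mul hf hg', divi_mul hf' hg] at h2
  rw [sub_eq_sub_iff_add_eq_add, h2]

/-- The quotient group of `ℕ₀[x]*` is a free abelian group. -/
theorem stmt0 : Module.Free ℤ (Additive quotGroupNNStar) := by
  choose r hr1 hr2 hr3 using fun u : quotGroupNNStar => exists_rep u.1 u.2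
  let φ : Additive quotGroupNNStar →+ (Polynomial ℤ →₀ ℤ) :=
    AddMonoidHom.mk' (fun a => divi (r a.toMul).1 - divi (r a.toMul).2) (by
      intro a b
      have h := divi_rep_eq (hr1 (a + b).toMul).2 (hr2 (a + b).toMul).2
        ((hr1 a.toMul).mul (hr1 b.toMul)).2 ((hr2 a.toMul).mul (hr2 b.toMul)).2
        (hr3 (a + b).toMul) (by
          rw [toRatFunc_mul, toRatFunc_mul, ← hr3, ← hr3]
          simp only [toMul_add, Subgroup.coe_mul, Units.val_mul]
          ring)
      rw [h, divi_mul (hr1 _).2 (hr1 _).2, divi_mul (hr2 _).2 (hr2 _).2]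
      abel)
  refine free_of_injective_finsupp φ ((injective_iff_map_eq_zero φ).2 fun a ha => ?_)
  have h1 : (r a.toMul).1 = (r a.toMul).2 := divi_inj (hr1 _) (hr2 _) (sub_eq_zero.1 ha)
  have h3 := hr3 a.toMul
  rw [h1] at h3
  have h4 : ((a.toMul : (RatFunc ℚ)ˣ) : RatFunc ℚ) = 1 :=
    mul_right_cancel₀ (toRatFunc_ne_zero (hr2 a.toMul).2) (h3.trans (one_mul _).symm)
  apply Additive.toMul.injective
  apply Subtype.ext
  apply Units.ext
  simpa using h4
end

section
/- Let f₁(x), …, f_m(x) ∈ ℕ₀[x]*\{x} be atoms of ℕ₀[x]* of degree at least 1. Then there exists a polynomial z(x) ∈ ℤ[x] having at least one negative coefficient (so z ∉ ℕ₀[x]), irreducible in ℤ[x], with deg(z) ≥ 2·maxᵢ deg(fᵢ), and such that fᵢ(x)·z(x) ∈ ℕ₀[x]* for every i = 1, …, m. -/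
open Polynomial

/-- `f ∣_ℕ g`: divisibility in the monoid `ℕ₀[x]*`. -/
def DvdN (f g : Polynomial ℤ) : Prop := ∃ h, NNStar h ∧ g = f * h

/-- `f` is an atom of the monoid `ℕ₀[x]*`. -/
def IsAtomN (f : Polynomial ℤ) : Prop :=
  NNStar f ∧ f ≠ 1 ∧ ∀ g h, NNStar g → NNStar h → f = g * h → g = 1 ∨ h = 1

/-- `f` is a prime element of the monoid `ℕ₀[x]*`. -/
def IsPrimeN (f : Polynomial ℤ) : Prop :=
  IsAtomN f ∧ ∀ g h, NNStar g → NNStar h → DvdN f (g * h) → DvdN f g ∨ DvdN f h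

theorem stmt1_coeff (g z : Polynomial ℤ) (D : ℕ) (K : ℤ) (hg : ∀ n, 0 ≤ g.coeff n)
    (h0 : 1 ≤ g.coeff 0) (hd1 : 1 ≤ g.natDegree) (hdD : g.natDegree ≤ D)
    (hK : ∀ n, g.coeff n ≤ K)
    (hzk : z.coeff (D+1) = -2) (hz0 : ∀ n, n ≠ D+1 → 0 ≤ z.coeff n)
    (hz : ∀ n, 0 < n → n < 2*D+2 → n ≠ D+1 → z.coeff n = 2*K) (n : ℕ) :
    0 ≤ (g * z).coeff n := by
  have hl : 1 ≤ g.coeff g.natDegree := by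
    have h1 : g.coeff g.natDegree ≠ 0 := by
      rw [Polynomial.coeff_natDegree, Ne, Polynomial.leadingCoeff_eq_zero]
      rintro rfl
      simp at hd1
    have := hg g.natDegree
    omega
  rw [Polynomial.coeff_mul]
  by_cases hn : n < D+1 ∨ g.coeff (n - (D+1)) = 0
  · apply Finset.sum_nonneg
    rintro ⟨i, j⟩ hij
    rw [Finset.HasAntidiagonal.mem_antidiagonal] at hij
    simp only at hij ⊢
    by_cases hj : j = D+1
    · have : g.coeff i = 0 := by
        rcases hn with hn | hn
        · omega
        · rw [← hn]; congr 1; omega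
      simp [this]
    · exact mul_nonneg (hg _) (hz0 _ hj)
  · push Not at hn
    obtain ⟨hn1, hn2⟩ := hn
    obtain ⟨j, rfl⟩ := Nat.exists_eq_add_of_le hn1
    rw [Nat.add_sub_cancel_left] at hn2
    have hjd : j ≤ g.natDegree := Polynomial.le_natDegree_of_ne_zero hn2
    have hmem : (j, D+1) ∈ Finset.HasAntidiagonal.antidiagonal (D+1+j) := by
      rw [Finset.HasAntidiagonal.mem_antidiagonal]; simp only; omega
    rw [← Finset.add_sum_erase _ _ hmem]
    have hnn : ∀ x ∈ (Finset.HasAntidiagonal.antidiagonal (D+1+j)).erase (j, D+1),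
        0 ≤ g.coeff x.1 * z.coeff x.2 := by
      rintro ⟨a, b⟩ hx
      rw [Finset.mem_erase, Finset.HasAntidiagonal.mem_antidiagonal] at hx
      obtain ⟨hx1, hx2⟩ := hx
      simp only at hx2 ⊢
      refine mul_nonneg (hg _) (hz0 _ ?_)
      rintro rfl
      apply hx1
      simp only [Prod.mk.injEq, and_true]
      omega
    have key : ∃ a b, a ≠ j ∧ a + b = D+1+j ∧ 1 ≤ g.coeff a ∧ z.coeff b = 2*K := by
      rcases Nat.eq_zero_or_pos j with rfl | hj
      · exact ⟨g.natDegree, D+1-g.natDegree, by omega, by omega, hl,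
          hz _ (by omega) (by omega) (by omega)⟩
      · exact ⟨0, D+1+j, by omega, by omega, h0, hz _ (by omega) (by omega) (by omega)⟩
    obtain ⟨a, b, haj, hab, hga, hzb⟩ := key
    have hm2 : (a, b) ∈ (Finset.HasAntidiagonal.antidiagonal (D+1+j)).erase (j, D+1) := by
      rw [Finset.mem_erase, Finset.HasAntidiagonal.mem_antidiagonal]
      refine ⟨?_, hab⟩
      intro h
      exact haj (Prod.mk.inj h).1
    have h2 := Finset.single_le_sum hnn hm2
    simp only [hzb] at h2
    rw [hzk]
    have := hK j
    have := hg j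
    nlinarith

/-- Lemma 3 (first part): for atoms `f₁, …, f_m ≠ x` of `ℕ₀[x]*` of degree at least 1,
there is `z ∈ ℤ[x] \ ℕ₀[x]`, irreducible in `ℤ[x]`, with `deg z ≥ 2·maxᵢ deg fᵢ` and
`fᵢ·z ∈ ℕ₀[x]*` for every `i`. -/
theorem stmt1 (m : ℕ) (hm : 0 < m) (f : Fin m → Polynomial ℤ)
    (hatom : ∀ i, IsAtomN (f i)) (hx : ∀ i, f i ≠ X)
    (hdeg : ∀ i, 1 ≤ (f i).natDegree) :
    ∃ z : Polynomial ℤ, ¬ NNPoly z ∧ Irreducible z ∧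
      (∀ i, 2 * (f i).natDegree ≤ z.natDegree) ∧
      (∀ i, NNStar (f i * z)) := by
  have hnn : ∀ i n, 0 ≤ (f i).coeff n := fun i n => (hatom i).1.1 n
  have hc0 : ∀ i, 1 ≤ (f i).coeff 0 := by
    intro i
    have h1 : (f i).coeff 0 ≠ 0 := by
      intro h
      obtain ⟨g, hg⟩ := Polynomial.X_dvd_iff.2 h
      have hgs : NNStar g := by
        refine ⟨fun n => ?_, ?_⟩
        · have := hnn i (n+1)
          rwa [hg, Polynomial.coeff_X_mul] at this
        · rintro rfl
          exact (hatom i).1.2 (by simpa using hg)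
      have hX : NNStar (X : Polynomial ℤ) := by
        refine ⟨fun n => ?_, Polynomial.X_ne_zero⟩
        rw [Polynomial.coeff_X]; split_ifs <;> simp
      rcases (hatom i).2.2 X g hX hgs hg with h | h
      · simpa using congrArg (fun p => Polynomial.coeff p 0) h
      · rw [h, mul_one] at hg
        exact hx i hg
    have := hnn i 0
    omega
  obtain ⟨D, hD⟩ : ∃ D, ∀ i, (f i).natDegree ≤ D :=
    ⟨∑ i, (f i).natDegree, fun i =>
      Finset.single_le_sum (f := fun i => (f i).natDegree) (fun _ _ => Nat.zero_le _)
        (Finset.mem_univ i)⟩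
  obtain ⟨K, hK0, hK⟩ : ∃ K : ℤ, 0 ≤ K ∧ ∀ i n, (f i).coeff n ≤ K := by
    have hs : ∀ i, 0 ≤ ∑ n ∈ (f i).support, (f i).coeff n :=
      fun i => Finset.sum_nonneg (fun n _ => hnn i n)
    refine ⟨∑ i, ∑ n ∈ (f i).support, (f i).coeff n,
      Finset.sum_nonneg (fun i _ => hs i), fun i n => ?_⟩
    refine le_trans ?_ (Finset.single_le_sum
      (f := fun i => ∑ n ∈ (f i).support, (f i).coeff n) (fun i _ => hs i) (Finset.mem_univ i))
    by_cases h : n ∈ (f i).support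
    · exact Finset.single_le_sum (f := fun n => (f i).coeff n) (fun n _ => hnn i n) h
    · rw [Polynomial.notMem_support_iff.1 h]; exact hs i
  obtain ⟨z, hz⟩ : ∃ z : Polynomial ℤ, ∀ n, z.coeff n =
      if n = 2*D+2 then 1 else if 2*D+2 < n then 0 else if n = 0 then 2 else
        if n = D+1 then -2 else 2*K := by
    refine ⟨∑ i ∈ Finset.range (2*D+3), Polynomial.monomial i
      (if i = 2*D+2 then (1:ℤ) else if i = 0 then 2 else if i = D+1 then -2 else 2*K), ?_⟩
    intro n
    simp only [Polynomial.finsetSum_coeff, Polynomial.coeff_monomial, Finset.sum_ite_eq',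
      Finset.mem_range]
    split_ifs <;> first | rfl | omega
  have hzk : z.coeff (D+1) = -2 := by
    rw [hz, if_neg (by omega), if_neg (by omega), if_neg (by omega), if_pos rfl]
  have hzN : z.coeff (2*D+2) = 1 := by rw [hz, if_pos rfl]
  have hdegz : z.natDegree = 2*D+2 := by
    apply le_antisymm
    · rw [Polynomial.natDegree_le_iff_coeff_eq_zero]
      intro n hn
      rw [hz, if_neg (by omega), if_pos hn]
    · exact Polynomial.le_natDegree_of_ne_zero (by rw [hzN]; exact one_ne_zero)
  have hmon : z.Monic := by
    rw [Polynomial.Monic, Polynomial.leadingCoeff, hdegz, hzN]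
  refine ⟨z, ?_, ?_, ?_, ?_⟩
  · intro h
    have := h (D+1)
    omega
  · have hp : (Ideal.span {(2:ℤ)}).IsPrime :=
      (Ideal.span_singleton_prime two_ne_zero).2 Int.prime_two
    have hE : z.IsEisensteinAt (Ideal.span {(2:ℤ)}) := by
      refine ⟨?_, ?_, ?_⟩
      · rw [hmon.leadingCoeff, Ideal.mem_span_singleton]; norm_num
      · intro n hn
        rw [hdegz] at hn
        rw [Ideal.mem_span_singleton, hz, if_neg (by omega), if_neg (by omega)]
        split_ifs
        · norm_num
        · norm_num
        · exact dvd_mul_right _ _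
      · rw [Ideal.span_singleton_pow, Ideal.mem_span_singleton, hz, if_neg (by omega),
          if_neg (by omega), if_pos rfl]
        norm_num
    exact hE.irreducible hp hmon.isPrimitive (by omega)
  · intro i
    have := hD i
    omega
  · intro i
    refine ⟨?_, mul_ne_zero (hatom i).1.2 hmon.ne_zero⟩
    refine stmt1_coeff (f i) z D K (hnn i) (hc0 i) (hdeg i) (hD i) (hK i) hzk ?_ ?_
    · intro n hn
      rw [hz]
      split_ifs <;> first | omega | positivity
    · intro n h1 h2 h3
      rw [hz, if_neg (by omega), if_neg (by omega), if_neg (by omega), if_neg h3]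
end

section
/- Let f(x) ≠ x be an atom of ℕ₀[x]* with deg(f) ≥ 1. Then there exist h(x) ∈ ℕ₀[x]* of degree at least 1 and z(x) ∈ ℤ[x]\ℕ₀[x] such that f(x) does not divide h(x) in ℕ₀[x]* (f ∤_ℕ h) and both f(x)·z(x) and h(x)·z(x) belong to ℕ₀[x]*. -/
open Polynomial

/-- The sum of all `X ^ i` with `i ≤ 2 n`, `i ≠ n`. -/
noncomputable def auxT (n : ℕ) : Polynomial ℤ := ∑ i ∈ (Finset.range (2 * n + 1)).erase n, X ^ i

theorem auxT_coeff (n j : ℕ) :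
    (auxT n).coeff j = if j ∈ (Finset.range (2 * n + 1)).erase n then 1 else 0 := by
  unfold auxT
  rw [finsetSum_coeff]
  simp only [coeff_X_pow]
  rw [Finset.sum_ite_eq]

theorem auxT_nonneg (n j : ℕ) : 0 ≤ (auxT n).coeff j := by
  rw [auxT_coeff]; split_ifs <;> norm_num

theorem coeff_mul_ge (g t : Polynomial ℤ) (hg : ∀ n, 0 ≤ g.coeff n) (ht : ∀ n, 0 ≤ t.coeff n)
    (a b : ℕ) : g.coeff a * t.coeff b ≤ (g * t).coeff (a + b) := by
  rw [coeff_mul]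
  exact Finset.single_le_sum (f := fun p : ℕ × ℕ => g.coeff p.1 * t.coeff p.2)
    (fun p _ => mul_nonneg (hg _) (ht _)) (a := (a, b)) (by simp)

theorem aux_main (g : Polynomial ℤ) (n : ℕ) (hn : 1 ≤ n) (hg : NNPoly g) (hd : g.natDegree = n)
    (h0 : 1 ≤ g.coeff 0) (A : ℤ) (hA : ∀ i, g.coeff i ≤ A) :
    NNPoly (g * (C A * auxT n - X ^ n)) := by
  intro j
  have hA0 : 0 ≤ A := le_trans (by omega) (hA 0)
  have hT : 0 ≤ (g * auxT n).coeff j := by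
    rw [coeff_mul]
    exact Finset.sum_nonneg fun p _ => mul_nonneg (hg _) (auxT_nonneg _ _)
  have e : g * (C A * auxT n - X ^ n) = C A * (g * auxT n) - g * X ^ n := by ring
  rw [e, coeff_sub, coeff_C_mul, coeff_mul_X_pow']
  have hAT := mul_nonneg hA0 hT
  split_ifs with hj
  · by_cases hj2 : 2 * n < j
    · rw [coeff_eq_zero_of_natDegree_lt (by omega : g.natDegree < j - n)]
      linarith
    · have h1 : 1 ≤ (g * auxT n).coeff j := by
        rcases hj.eq_or_lt with rfl | hlt
        · have := coeff_mul_ge g (auxT n) hg (auxT_nonneg n) n 0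
          rw [auxT_coeff, if_pos (by simp; omega)] at this
          have hl : g.coeff n ≠ 0 := by
            rw [← hd]
            intro h
            have := leadingCoeff_eq_zero.1 h
            simp [this] at h0
          have := hg n
          simp only [add_zero] at *
          omega
        · have := coeff_mul_ge g (auxT n) hg (auxT_nonneg n) 0 j
          rw [auxT_coeff, if_pos (by simp; omega)] at this
          simp only [zero_add] at *
          omega
      have := hA (j - n)
      nlinarith
  · linarith

/-- Lemma 3 (second part): if `f ≠ x` is an atom of `ℕ₀[x]*` of degree at least 1, then
there exist `h ∈ ℕ₀[x]*` of degree at least 1 and `z ∈ ℤ[x] \ ℕ₀[x]` such that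
`f ∤_ℕ h` and both `f·z` and `h·z` belong to `ℕ₀[x]*`. -/
theorem stmt2 (f : Polynomial ℤ) (hf : IsAtomN f) (hfx : f ≠ X) (hdeg : 1 ≤ f.natDegree) :
    ∃ h z : Polynomial ℤ, NNStar h ∧ 1 ≤ h.natDegree ∧ ¬ NNPoly z ∧
      ¬ DvdN f h ∧ NNStar (f * z) ∧ NNStar (h * z) := by
  obtain ⟨⟨hnn, hne⟩, -, hat⟩ := hf
  have h0 : 1 ≤ f.coeff 0 := by
    have := hnn 0
    by_contra hc
    have h0 : f.coeff 0 = 0 := by omega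
    obtain ⟨q, rfl⟩ := X_dvd_iff.2 h0
    have hq : NNStar q := ⟨fun n => by simpa using hnn (n + 1), right_ne_zero_of_mul hne⟩
    have hX : NNStar (X : Polynomial ℤ) :=
      ⟨fun n => by rw [coeff_X]; split_ifs <;> norm_num, X_ne_zero⟩
    rcases hat X q hX hq rfl with h | h
    · have := congrArg natDegree h; simp at this
    · exact hfx (by rw [h, mul_one])
  obtain ⟨A, hA⟩ : ∃ A : ℤ, ∀ i, f.coeff i + 1 ≤ A := by
    refine ⟨∑ i ∈ Finset.range (f.natDegree + 1), f.coeff i + 1, fun i => ?_⟩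
    by_cases hi : i ∈ Finset.range (f.natDegree + 1)
    · have := Finset.single_le_sum (f := f.coeff) (fun p _ => hnn p) hi
      linarith
    · rw [coeff_eq_zero_of_natDegree_lt (by simpa using hi)]
      have := Finset.sum_nonneg (s := Finset.range (f.natDegree + 1)) (fun p _ => hnn p)
      linarith
  have hc1 : ∀ i, (f + 1).coeff i = f.coeff i + if i = 0 then 1 else 0 := by
    intro i; rw [coeff_add, coeff_one]
  have hd1 : (f + 1).natDegree = f.natDegree := by
    rw [← C_1, natDegree_add_C]
  have hnn1 : NNPoly (f + 1) := by
    intro i; rw [hc1]; have := hnn i; split_ifs <;> omega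
  have hne1 : f + 1 ≠ 0 := by
    intro h; rw [h] at hd1; simp at hd1; omega
  have hz : (C A * auxT f.natDegree - X ^ f.natDegree).coeff f.natDegree = -1 := by
    rw [coeff_sub, coeff_C_mul, auxT_coeff]; simp
  have hz0 : C A * auxT f.natDegree - X ^ f.natDegree ≠ 0 := by
    intro h; rw [h] at hz; simp at hz
  refine ⟨f + 1, C A * auxT f.natDegree - X ^ f.natDegree, ⟨hnn1, hne1⟩, by omega, ?_, ?_,
    ⟨?_, mul_ne_zero hne hz0⟩, ⟨?_, mul_ne_zero hne1 hz0⟩⟩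
  · intro h
    have := h f.natDegree
    omega
  · rintro ⟨q, -, hq⟩
    have h1 : f ∣ 1 := ⟨q - 1, by rw [mul_sub, ← hq]; ring⟩
    have := natDegree_eq_zero_of_isUnit (isUnit_of_dvd_one h1)
    omega
  · exact aux_main f _ hdeg hnn rfl h0 A fun i => by have := hA i; omega
  · refine aux_main (f + 1) _ hdeg hnn1 hd1 (by rw [hc1]; simp; omega) A fun i => ?_
    rw [hc1]
    have := hA i
    split_ifs <;> omega
end

section
/- Let f(x) ≠ x be an atom of ℕ₀[x]* with deg(f) ≥ 1. Then f(x) is not a prime element of ℕ₀[x]*. -/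
open Polynomial

lemma nn_add {f g : Polynomial ℤ} (hf : NNPoly f) (hg : NNPoly g) : NNPoly (f + g) := by
  intro n
  rw [coeff_add]
  exact add_nonneg (hf n) (hg n)

lemma nn_mul {f g : Polynomial ℤ} (hf : NNPoly f) (hg : NNPoly g) : NNPoly (f * g) := by
  intro n
  rw [coeff_mul]
  exact Finset.sum_nonneg fun p _ => mul_nonneg (hf _) (hg _)

lemma nn_C {a : ℤ} (ha : 0 ≤ a) : NNPoly (C a) := by
  intro n
  rw [coeff_C]
  split_ifs <;> omega

lemma nn_one : NNPoly 1 := by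
  have := nn_C (a := 1) (by norm_num)
  simpa using this

lemma nn_X : NNPoly X := by
  intro n
  rw [coeff_X]
  split_ifs <;> omega

lemma nn_X_pow (k : ℕ) : NNPoly (X ^ k) := by
  intro n
  rw [coeff_X_pow]
  split_ifs <;> omega

lemma nn_divX {f : Polynomial ℤ} (hf : NNPoly f) : NNPoly f.divX := by
  intro n
  rw [coeff_divX]
  exact hf _

/-- If `f ≠ x` is an atom of `ℕ₀[x]*` with `deg f ≥ 1`, then `f` is not a prime element
of `ℕ₀[x]*`. -/
theorem stmt4 (f : Polynomial ℤ) (hf : IsAtomN f) (hfx : f ≠ X) (hdeg : 1 ≤ f.natDegree) :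
    ¬ IsPrimeN f := by
  rintro ⟨-, hprime⟩
  obtain ⟨⟨hnn, hf0⟩, hf1, hat⟩ := hf
  obtain ⟨a, ha⟩ : ∃ a, a = f.coeff 0 := ⟨_, rfl⟩
  obtain ⟨P, hP⟩ : ∃ P, P = f.divX := ⟨_, rfl⟩
  have hfP : f = X * P + C a := by rw [ha, hP, X_mul_divX_add]
  have hPnn : NNPoly P := hP ▸ nn_divX hnn
  have hP0 : P ≠ 0 := by
    rintro rfl
    rw [hfP] at hdeg
    simp at hdeg
  have ha0 : a ≠ 0 := by
    intro h
    rw [h] at hfP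
    simp only [map_zero, add_zero] at hfP
    rcases hat X P ⟨nn_X, X_ne_zero⟩ ⟨hPnn, hP0⟩ hfP with h | h
    · simpa using congrArg (fun p => coeff p 0) h
    · exact hfx (by rw [hfP, h, mul_one])
  have hapos : 0 < a := lt_of_le_of_ne (ha ▸ hnn 0) (Ne.symm ha0)
  obtain ⟨g, hg, hgX⟩ := exists_eq_pow_rootMultiplicity_mul_and_not_dvd P hP0 0
  obtain ⟨n, hn⟩ : ∃ n, n = rootMultiplicity 0 P := ⟨_, rfl⟩
  rw [← hn] at hg
  simp only [map_zero, sub_zero] at hg hgX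
  have hgnn : NNPoly g := by
    intro i
    have := hPnn (i + n)
    rwa [hg, coeff_X_pow_mul] at this
  obtain ⟨b, hb⟩ : ∃ b, b = g.coeff 0 := ⟨_, rfl⟩
  obtain ⟨r, hr⟩ : ∃ r, r = g.divX := ⟨_, rfl⟩
  have hgr : g = X * r + C b := by rw [hb, hr, X_mul_divX_add]
  have hrnn : NNPoly r := hr ▸ nn_divX hgnn
  have hbpos : 0 < b := by
    refine lt_of_le_of_ne (hb ▸ hgnn 0) (Ne.symm ?_)
    rw [hb]
    exact fun h => hgX (X_dvd_iff.2 h)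
  obtain ⟨q, hq⟩ : ∃ q : Polynomial ℤ,
      q = C a - C b * X ^ (n + 1) + X ^ (n + 2) * (C b * (1 + P)) := ⟨_, rfl⟩
  have hqm : q.coeff (n + 1) = - b := by
    rw [hq, coeff_add, coeff_sub, coeff_C_mul_X_pow, coeff_X_pow_mul', coeff_C]
    simp
  have hqnn : ¬ NNPoly q := by
    intro h
    have := h (n + 1)
    omega
  have hq0 : q ≠ 0 := by
    rintro rfl
    exact hqnn (fun i => by simp)
  have hCa : NNPoly (C a) := nn_C hapos.le
  have hCb : NNPoly (C b) := nn_C hbpos.le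
  have hf1nn : NNPoly (X * P + C (a - 1)) := nn_add (nn_mul nn_X hPnn) (nn_C (by omega))
  have h1P : NNPoly (1 + P) := nn_add nn_one hPnn
  have hX2 := nn_X_pow (n + 2)
  have e1 : f * q = C a * C a + C a * X ^ (n + 2) * r
      + C b * X ^ (n + 2) * ((1 + P) * (X * P + C (a - 1)) + 1) := by
    have h1 : f = C a + X ^ (n + 1) * (X * r + C b) := by
      rw [hfP, hg, hgr]; ring
    have h2 : X ^ (n + 1) * (X * r + C b) = X * P := by
      rw [hg, hgr]; ring
    have h3 : C (a - 1) = (C a - 1 : Polynomial ℤ) := by simp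
    rw [hq, h3, hfP]
    linear_combination (-(C a) : Polynomial ℤ) * h2
  have n1 : NNPoly (f * q) := by
    rw [e1]
    exact nn_add (nn_add (nn_mul hCa hCa) (nn_mul (nn_mul hCa hX2) hrnn))
      (nn_mul (nn_mul hCb hX2) (nn_add (nn_mul h1P hf1nn) nn_one))
  have e2 : q * (f + X) = C a * C a + C a * X ^ (n + 2) * r
      + C b * X ^ (n + 2) * ((1 + P) * (X * P + C (a - 1)))
      + (C a * X + X ^ (n + 2) * X * (C b * (1 + P))) := by
    have : q * (f + X) = f * q + X * q := by ring
    rw [this, e1, hq]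
    ring
  have n2 : NNPoly (q * (f + X)) := by
    rw [e2]
    exact nn_add (nn_add (nn_add (nn_mul hCa hCa) (nn_mul (nn_mul hCa hX2) hrnn))
      (nn_mul (nn_mul hCb hX2) (nn_mul h1P hf1nn)))
      (nn_add (nn_mul hCa nn_X) (nn_mul (nn_mul hX2 nn_X) (nn_mul hCb h1P)))
  have hk0 : f + X ≠ 0 := by
    intro h
    have := congrArg (fun p => coeff p 0) h
    simp at this
    omega
  rcases hprime (f * q) (f + X) ⟨n1, mul_ne_zero hf0 hq0⟩ ⟨nn_add hnn nn_X, hk0⟩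
    ⟨q * (f + X), ⟨n2, mul_ne_zero hq0 hk0⟩, by ring⟩ with ⟨h, hh, e⟩ | ⟨h, hh, e⟩
  · exact hqnn (mul_left_cancel₀ hf0 e ▸ hh.1)
  · have e3 : f * (h - 1) = X := by linear_combination -e
    have hc : (h - 1).coeff 0 = 0 := by
      have := congrArg (fun p => coeff p 0) e3
      simp only [mul_coeff_zero, coeff_X_zero, ← ha] at this
      exact (mul_eq_zero.1 this).resolve_left ha0
    obtain ⟨s, hs⟩ := X_dvd_iff.2 hc
    have e4 : f * s = 1 := by
      apply mul_left_cancel₀ (X_ne_zero (R := ℤ))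
      rw [hs] at e3
      linear_combination e3
    have := natDegree_eq_zero_of_isUnit (IsUnit.of_mul_eq_one _ e4)
    omega
end

section
/- Let E := {f(x) ∈ ℤ[x] : f(x)·g(x) ∈ ℕ₀[x]* for some g(x) ∈ ℤ[x]}. Then: (1) E is a multiplicative submonoid of ℤ[x]\{0} containing ℕ₀[x]*; (2) E is divisor-closed in ℤ[x]: if f ∈ E, g ∈ ℤ[x] and g divides f in ℤ[x], then g ∈ E; (3) both inclusions are strict: x² − x + 1 ∈ E\ℕ₀[x]* and x − 1 ∈ ℤ[x]\E; (4) the atoms of the monoid E are exactly the elements of E that are irreducible in ℤ[x]. -/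
open Polynomial

/-- `E = {f ∈ ℤ[x] : f·g ∈ ℕ₀[x]* for some g ∈ ℤ[x]}`. -/
def Eset : Set (Polynomial ℤ) := {f | ∃ g : Polynomial ℤ, NNStar (f * g)}

/-- The units of the monoid `E` are `1` and `-1`. -/
def IsUnitE (f : Polynomial ℤ) : Prop := f = 1 ∨ f = -1

/-- `f` is an atom of the monoid `E`. -/
def IsAtomE (f : Polynomial ℤ) : Prop :=
  f ∈ Eset ∧ ¬ IsUnitE f ∧
    ∀ g h, g ∈ Eset → h ∈ Eset → f = g * h → IsUnitE g ∨ IsUnitE h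

theorem isUnitE_iff (f : Polynomial ℤ) : IsUnitE f ↔ IsUnit f := by
  rw [Polynomial.isUnit_iff]
  constructor
  · rintro (rfl | rfl)
    · exact ⟨1, isUnit_one, by simp⟩
    · exact ⟨-1, isUnit_one.neg, by simp⟩
  · rintro ⟨r, hr, rfl⟩
    rcases Int.isUnit_iff.mp hr with rfl | rfl
    · left; simp
    · right; simp

theorem Eset_dvd {f g : Polynomial ℤ} (hf : f ∈ Eset) (h : g ∣ f) : g ∈ Eset := by
  obtain ⟨k, rfl⟩ := h
  obtain ⟨l, hl⟩ := hf
  exact ⟨k * l, by rwa [← mul_assoc]⟩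

theorem NNStar.eval_one_ne {f : Polynomial ℤ} (hf : NNStar f) : f.eval 1 ≠ 0 := by
  intro h
  rw [Polynomial.eval_eq_sum, Polynomial.sum] at h
  simp only [one_pow, mul_one] at h
  rw [Finset.sum_eq_zero_iff_of_nonneg (fun i _ => hf.1 i)] at h
  apply hf.2
  ext n
  by_contra hn
  exact hn (by simpa using h n (Polynomial.mem_support_iff.mpr (by simpa using hn)))

theorem NNStar.mem {f : Polynomial ℤ} (hf : NNStar f) : f ∈ Eset := ⟨1, by rwa [mul_one]⟩

/-- (1) `E` is a submonoid of `ℤ[x] \ {0}` containing `ℕ₀[x]*`; (2) `E` is divisor-closed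
in `ℤ[x]`; (3) both inclusions `ℕ₀[x]* ⊆ E ⊆ ℤ[x] \ {0}` are strict, witnessed by
`x² - x + 1 ∈ E \ ℕ₀[x]*` and `x - 1 ∈ ℤ[x] \ E`; (4) the atoms of `E` are exactly the
elements of `E` irreducible in `ℤ[x]`. -/
theorem stmt10 :
    ((1 : Polynomial ℤ) ∈ Eset ∧ (∀ f ∈ Eset, ∀ g ∈ Eset, f * g ∈ Eset) ∧
      (∀ f ∈ Eset, f ≠ 0) ∧ (∀ f, NNStar f → f ∈ Eset)) ∧
    (∀ f ∈ Eset, ∀ g : Polynomial ℤ, g ∣ f → g ∈ Eset) ∧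
    ((X ^ 2 - X + 1 : Polynomial ℤ) ∈ Eset ∧ ¬ NNStar (X ^ 2 - X + 1 : Polynomial ℤ) ∧
      (X - 1 : Polynomial ℤ) ∉ Eset) ∧
    (∀ f ∈ Eset, (IsAtomE f ↔ Irreducible f)) := by
  refine ⟨⟨?_, ?_, ?_, fun f hf => hf.mem⟩, fun f hf g h => Eset_dvd hf h, ⟨?_, ?_, ?_⟩, ?_⟩
  · refine NNStar.mem ⟨fun n => ?_, one_ne_zero⟩
    rw [Polynomial.coeff_one]
    split_ifs <;> norm_num
  · rintro f ⟨a, ha⟩ g ⟨b, hb⟩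
    refine ⟨a * b, ?_⟩
    rw [mul_mul_mul_comm]
    exact ha.mul hb
  · rintro f ⟨a, ha⟩ rfl
    exact ha.2 (zero_mul a)
  · refine ⟨X + 1, ?_⟩
    have e : (X ^ 2 - X + 1 : Polynomial ℤ) * (X + 1) = X ^ 3 + 1 := by ring
    rw [e]
    refine ⟨fun n => ?_, fun h => ?_⟩
    · rw [Polynomial.coeff_add, Polynomial.coeff_X_pow, Polynomial.coeff_one]
      split_ifs <;> norm_num
    · have := congrArg (Polynomial.eval 1) h
      norm_num at this
  · intro h
    have := h.1 1
    simp [Polynomial.coeff_X, Polynomial.coeff_one, Polynomial.coeff_X_pow] at this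
  · rintro ⟨g, hg⟩
    exact hg.eval_one_ne (by simp)
  · intro f hf
    rw [irreducible_iff]
    simp only [IsAtomE, isUnitE_iff]
    constructor
    · rintro ⟨_, hu, h⟩
      refine ⟨hu, fun a b hab => h a b ?_ ?_ hab⟩
      · exact Eset_dvd hf ⟨b, hab⟩
      · exact Eset_dvd hf ⟨a, by rw [hab, mul_comm]⟩
    · rintro ⟨hu, h⟩
      exact ⟨hf, hu, fun a b _ _ hab => h hab⟩
end

section
/- For every n ∈ ℕ, the polynomial xⁿ + 2 is irreducible in ℤ[x]. Moreover, if f(x) ∈ ℤ[x]\ℕ₀[x] is a polynomial of degree d (so f has at least one negative coefficient), then (x^{d+1} + 2)^k·f(x) ∉ ℕ₀[x] for every k ∈ ℕ. -/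
open Polynomial

theorem coeff_aux (m : ℕ) (f : Polynomial ℤ) (k i : ℕ) (hi : i < m) :
    ((X ^ m + C 2) ^ k * f).coeff i = 2 ^ k * f.coeff i := by
  induction k with
  | zero => simp
  | succ k ih =>
    rw [pow_succ', mul_assoc, add_mul, coeff_add, coeff_C_mul, ih, coeff_X_pow_mul',
      if_neg (by omega)]
    ring

/-- For every `n ≥ 1` the polynomial `xⁿ + 2` is irreducible in `ℤ[x]`; moreover, if
`f ∈ ℤ[x] \ ℕ₀[x]` has degree `d`, then `(x^(d+1) + 2)^k · f ∉ ℕ₀[x]` for every `k ≥ 1`. -/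
theorem stmt13 :
    (∀ n : ℕ, 1 ≤ n → Irreducible (X ^ n + C 2 : Polynomial ℤ)) ∧
    (∀ f : Polynomial ℤ, ¬ NNPoly f → ∀ k : ℕ, 1 ≤ k →
      ¬ NNPoly ((X ^ (f.natDegree + 1) + C 2) ^ k * f)) := by
  refine ⟨fun n hn => ?_, fun f hf k _ h => hf fun i => ?_⟩
  · have hm : (X ^ n + C 2 : Polynomial ℤ).Monic := monic_X_pow_add_C 2 (by omega)
    have hd : (X ^ n + C 2 : Polynomial ℤ).natDegree = n := natDegree_X_pow_add_C
    have hp : (Ideal.span {(2 : ℤ)}).IsPrime :=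
      (Ideal.span_singleton_prime (by norm_num)).2 Int.prime_two
    refine irreducible_of_eisenstein_criterion hp ?_ ?_ ?_ ?_ hm.isPrimitive
    · rw [hm.leadingCoeff, Ideal.mem_span_singleton]; norm_num
    · intro i hi
      rw [degree_eq_natDegree hm.ne_zero, hd] at hi
      have hi' : i < n := by exact_mod_cast hi
      rw [coeff_add, coeff_X_pow, if_neg (by omega), Ideal.mem_span_singleton, zero_add, coeff_C]
      split_ifs <;> simp
    · rw [← natDegree_pos_iff_degree_pos, hd]; omega
    · rw [coeff_add, coeff_X_pow, if_neg (by omega), Ideal.span_singleton_pow,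
        Ideal.mem_span_singleton, zero_add, coeff_C_zero]
      norm_num
  · by_cases hi : i < f.natDegree + 1
    · have := h i
      rw [coeff_aux _ _ _ _ hi] at this
      exact nonneg_of_mul_nonneg_right this (by positivity)
    · rw [coeff_eq_zero_of_natDegree_lt (by omega)]
end

section
/- Let f(x) := x⁴ + 2x³ − x² + 4x + 2 ∈ ℤ[x]. Then f(x) ∉ ℕ₀[x], while f(x)·(x+1) = x⁵ + 3x⁴ + x³ + 3x² + 6x + 2 ∈ ℕ₀[x]* and f(x)² = x⁸ + 4x⁷ + 2x⁶ + 4x⁵ + 21x⁴ + 12x² + 16x + 4 ∈ ℕ₀[x]*. Consequently, the monoid ℕ₀[x]* is not root closed: there exists an element q of the quotient group of ℕ₀[x]* with q ∉ ℕ₀[x]* but q² ∈ ℕ₀[x]*. -/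
open Polynomial

/-- Kainrath's example polynomial `f(x) = x⁴ + 2x³ - x² + 4x + 2`. -/
noncomputable def fK : Polynomial ℤ := X ^ 4 + 2 * X ^ 3 - X ^ 2 + 4 * X + 2

theorem nnStar_of_map (p : Polynomial ℤ) (q : Polynomial ℕ)
    (h : p = q.map (Nat.castRingHom ℤ)) (h1 : p.eval 1 ≠ 0) : NNStar p := by
  refine ⟨fun n => ?_, ?_⟩
  · rw [h, coeff_map]
    simp
  · rintro rfl
    simp at h1

theorem fK_not_nn : ¬ NNPoly fK := by
  intro h
  have h2 := h 2
  have e : fK = X ^ 4 + C 2 * X ^ 3 - X ^ 2 + C 4 * X + C 2 := by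
    simp [fK]
  rw [e] at h2
  simp [coeff_X, coeff_C, coeff_X_pow] at h2

/-- `f = x⁴ + 2x³ - x² + 4x + 2 ∉ ℕ₀[x]`, while
`f·(x+1) = x⁵ + 3x⁴ + x³ + 3x² + 6x + 2 ∈ ℕ₀[x]*` and
`f² = x⁸ + 4x⁷ + 2x⁶ + 4x⁵ + 21x⁴ + 12x² + 16x + 4 ∈ ℕ₀[x]*`. Consequently `ℕ₀[x]*` is
not root closed: there is an element `q = a/b` of its quotient group with `q ∉ ℕ₀[x]*`
but `q² ∈ ℕ₀[x]*`. -/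
theorem stmt14 :
    ¬ NNPoly fK ∧
    fK * (X + 1) = X ^ 5 + 3 * X ^ 4 + X ^ 3 + 3 * X ^ 2 + 6 * X + 2 ∧
    NNStar (fK * (X + 1)) ∧
    fK ^ 2 = X ^ 8 + 4 * X ^ 7 + 2 * X ^ 6 + 4 * X ^ 5 + 21 * X ^ 4 + 12 * X ^ 2
      + 16 * X + 4 ∧
    NNStar (fK ^ 2) ∧
    ∃ a b : Polynomial ℤ, NNStar a ∧ NNStar b ∧
      (∃ c, NNStar c ∧ a ^ 2 = b ^ 2 * c) ∧ ¬ (∃ c, NNStar c ∧ a = b * c) := by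
  have e1 : fK * (X + 1) = X ^ 5 + 3 * X ^ 4 + X ^ 3 + 3 * X ^ 2 + 6 * X + 2 := by
    unfold fK; ring
  have e2 : fK ^ 2 = X ^ 8 + 4 * X ^ 7 + 2 * X ^ 6 + 4 * X ^ 5 + 21 * X ^ 4 + 12 * X ^ 2
      + 16 * X + 4 := by
    unfold fK; ring
  have n1 : NNStar (fK * (X + 1)) := by
    rw [e1]
    exact nnStar_of_map _ (X ^ 5 + 3 * X ^ 4 + X ^ 3 + 3 * X ^ 2 + 6 * X + 2)
      (by simp) (by simp)
  have n2 : NNStar (fK ^ 2) := by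
    rw [e2]
    exact nnStar_of_map _ (X ^ 8 + 4 * X ^ 7 + 2 * X ^ 6 + 4 * X ^ 5 + 21 * X ^ 4 + 12 * X ^ 2
      + 16 * X + 4) (by simp) (by simp)
  have n3 : NNStar (X + 1) := nnStar_of_map _ (X + 1) (by simp) (by simp)
  refine ⟨fK_not_nn, e1, n1, e2, n2, fK * (X + 1), X + 1, n1, n3, ⟨fK ^ 2, n2, by ring⟩, ?_⟩
  rintro ⟨c, hc, h⟩
  rw [mul_comm] at h
  have := mul_left_cancel₀ n3.2 h
  exact fK_not_nn (this ▸ hc.1)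
end

section
/- If f(x), g(x) ∈ ℕ₀[x]* and there exists an integer n ≥ 1 such that g(x)ⁿ divides f(x)ⁿ in ℕ₀[x]* (i.e., f ⁿ = gⁿ·h for some h ∈ ℕ₀[x]*), then g(x) divides f(x) in ℤ[x]. Moreover, for every integer n ≥ 1, the polynomial (x−1)ⁿ has a negative coefficient, i.e., (x−1)ⁿ ∉ ℕ₀[x]. Consequently, the root closure of ℕ₀[x]* inside its quotient group is contained in ℤ[x] and does not contain x−1. -/
open Polynomial

/-- If `f, g ∈ ℕ₀[x]*` and `gⁿ ∣ fⁿ` in `ℕ₀[x]*` for some `n ≥ 1`, then `g ∣ f` in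
`ℤ[x]`; moreover `(x-1)ⁿ ∉ ℕ₀[x]` for every `n ≥ 1`. Consequently, every element of the
root closure of `ℕ₀[x]*` lies in `ℤ[x]`, and `x - 1` does not belong to the root
closure. -/
theorem stmt17 :
    (∀ f g : Polynomial ℤ, NNStar f → NNStar g →
      (∃ n : ℕ, 1 ≤ n ∧ ∃ h, NNStar h ∧ f ^ n = g ^ n * h) → g ∣ f) ∧
    (∀ n : ℕ, 1 ≤ n → ¬ NNPoly ((X - 1 : Polynomial ℤ) ^ n)) ∧
    (¬ ∃ n : ℕ, 1 ≤ n ∧ NNStar ((X - 1 : Polynomial ℤ) ^ n)) := by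
  have key : ∀ n : ℕ, 1 ≤ n → ¬ NNPoly ((X - 1 : Polynomial ℤ) ^ n) := by
    intro n hn h
    obtain ⟨m, rfl⟩ : ∃ m, n = m + 1 := ⟨n - 1, by omega⟩
    have h1 := h m
    have h2 : (X - 1 : Polynomial ℤ) = X + C (-1) := by simp [sub_eq_add_neg]
    rw [h2, coeff_X_add_C_pow] at h1
    simp at h1
    omega
  refine ⟨?_, key, ?_⟩
  · rintro f g _ _ ⟨n, hn, h, _, e⟩
    exact (IsIntegrallyClosed.pow_dvd_pow_iff (by omega : n ≠ 0)).1 ⟨h, e⟩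
  · rintro ⟨n, hn, h⟩
    exact key n hn h.1
end
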